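/- Let (V,E,Ψ) be a strongly connected planar box-like self-affine GIFS with positive weights (p_e) and graph-directed measure family (μ_v)_{v∈V}. Then for every s∈ℝ and q≥0 the limit P(s,q)=lim_{k→∞}‖A_k^{s,q}‖^{1/k} exists. Moreover, for each fixed q≥0 the function s↦P(s,q) is strictly decreasing on ℝ, and there exists a unique s∈ℝ with P(s,q)=1. -/

import Mathlib

open MeasureTheory Filter Set
open scoped Classical

noncomputable section

namespace LqGIFS

/-! ### Mesh cubes, moment sums, L^q spectra, box dimension -/

/-- Closed cube of the `δ`-mesh of `ℝ`. -/
def meshCube1 (δ : ℝ) (k : ℤ) : Set ℝ := Set.Icc ((k : ℝ) * δ) (((k : ℝ) + 1) * δ)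

/-- Closed cube of the `δ`-mesh of `ℝ²`. -/
def meshCube2 (δ : ℝ) (k : ℤ × ℤ) : Set (ℝ × ℝ) :=
  (Set.Icc ((k.1 : ℝ) * δ) (((k.1 : ℝ) + 1) * δ)) ×ˢ
    (Set.Icc ((k.2 : ℝ) * δ) (((k.2 : ℝ) + 1) * δ))

/-- The moment sum `D_δ^q(ν)` for a measure on `ℝ` (cubes of zero measure are omitted,
so that at `q = 0` this counts the mesh cubes of positive measure). -/
def Dq1 (ν : Measure ℝ) (δ q : ℝ) : ℝ :=
  ∑' k : ℤ, if ν (meshCube1 δ k) = 0 then 0 else (ν (meshCube1 δ k)).toReal ^ q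

/-- The moment sum `D_δ^q(ν)` for a measure on `ℝ²`. -/
def Dq2 (ν : Measure (ℝ × ℝ)) (δ q : ℝ) : ℝ :=
  ∑' k : ℤ × ℤ, if ν (meshCube2 δ k) = 0 then 0 else (ν (meshCube2 δ k)).toReal ^ q

/-- The `L^q`-spectrum of a measure on `ℝ` exists and equals `s` (i.e. upper and lower
`L^q`-spectra coincide and equal `s`). -/
def HasLq1 (ν : Measure ℝ) (q s : ℝ) : Prop :=
  Tendsto (fun δ : ℝ => Real.log (Dq1 ν δ q) / (-Real.log δ))
    (nhdsWithin 0 (Set.Ioi 0)) (nhds s)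

/-- The `L^q`-spectrum of a measure on `ℝ²` exists and equals `s`. -/
def HasLq2 (ν : Measure (ℝ × ℝ)) (q s : ℝ) : Prop :=
  Tendsto (fun δ : ℝ => Real.log (Dq2 ν δ q) / (-Real.log δ))
    (nhdsWithin 0 (Set.Ioi 0)) (nhds s)

/-- Number of closed `δ`-mesh cubes of `ℝ²` meeting `X`. -/
def boxCount (X : Set (ℝ × ℝ)) (δ : ℝ) : ℕ :=
  Set.ncard {k : ℤ × ℤ | (X ∩ meshCube2 δ k).Nonempty}

/-- The box dimension of `X` exists and equals `d`. -/
def HasBoxDim (X : Set (ℝ × ℝ)) (d : ℝ) : Prop :=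
  Tendsto (fun δ : ℝ => Real.log (boxCount X δ) / (-Real.log δ))
    (nhdsWithin 0 (Set.Ioi 0)) (nhds d)

/-! ### Matrices: 1-norm, spectral radius, permutation matrices -/

/-- The 1-norm `‖A‖ = ∑_{i,j} |a_{ij}|` of a square matrix. -/
def mnorm {ι : Type*} [Fintype ι] (A : Matrix ι ι ℝ) : ℝ := ∑ i, ∑ j, |A i j|

/-- The spectral radius of a square real matrix, via the Gelfand formula. -/
def specRad {ι : Type*} [Fintype ι] [DecidableEq ι] (A : Matrix ι ι ℝ) : ℝ :=
  Filter.limsup (fun k : ℕ => (mnorm (A ^ k)) ^ ((k : ℝ)⁻¹)) Filter.atTop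

/-- A square 0-1 matrix with exactly one 1 in each row and each column. -/
def IsPermMatrix {ι : Type*} (Z : Matrix ι ι ℝ) : Prop :=
  (∀ i j, Z i j = 0 ∨ Z i j = 1) ∧ (∀ i, ∃! j, Z i j = 1) ∧ (∀ j, ∃! i, Z i j = 1)

/-! ### Directed graphs -/

/-- Strong connectivity of the finite directed graph with edge set `E`,
initial vertex map `ini` and terminal vertex map `ter`. -/
def GraphSC {V E : Type*} (ini ter : E → V) : Prop :=
  ∀ v v' : V, Relation.TransGen (fun u u' : V => ∃ e, ini e = u ∧ ter e = u') v v'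

/-- The matrix `F^{(q)}_{x,y}` with entry `p_{e'}^q a_{e'}^x b_{e'}^y` at `(e,e')` when
`t(e) = i(e')`, and `0` otherwise. -/
def FmatG {V E : Type*} (ini ter : E → V) (p a b : E → ℝ) (q x y : ℝ) :
    Matrix E E ℝ :=
  fun e e' => if ter e = ini e' then p e' ^ q * a e' ^ x * b e' ^ y else 0

/-- `f` is the entrywise product of the normalized left and right Perron vectors of the
irreducible matrix `F^{(q)}_{x,y(x)}` (spectral radius 1). -/
def IsPerronData {V E : Type*} [Fintype E] [DecidableEq E] (ini ter : E → V)
    (p a b : E → ℝ) (q x yx : ℝ) (f : E → ℝ) : Prop :=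
  specRad (FmatG ini ter p a b q x yx) = 1 ∧
  ∃ u v : E → ℝ, (∀ e, 0 < u e) ∧ (∀ e, 0 < v e) ∧ (∑ e, u e) = 1 ∧
    (FmatG ini ter p a b q x yx).mulVec u = u ∧
    (FmatG ini ter p a b q x yx).vecMul v = v ∧
    (∑ e, v e * u e) = 1 ∧ (∀ e, f e = v e * u e)

/-! ### Planar box-like graph-directed self-affine systems -/

/-- A planar box-like self-affine GIFS: a finite directed graph together with, for each
edge `e`, a contraction `ψ_e(z) = T_e z + t_e` whose linear part is the diagonal matrix
`diag(±a_e, ±b_e)` (when `diag e = true`) or the anti-diagonal matrix with entries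
`±a_e` (top right) and `±b_e` (bottom left) (when `diag e = false`), `0 < a_e, b_e < 1`. -/
structure BoxLikeGIFS (V E : Type*) where
  init : E → V
  term : E → V
  a : E → ℝ
  b : E → ℝ
  sa : E → ℝ
  sb : E → ℝ
  diag : E → Bool
  trans : E → ℝ × ℝ
  a_mem : ∀ e, a e ∈ Set.Ioo (0 : ℝ) 1
  b_mem : ∀ e, b e ∈ Set.Ioo (0 : ℝ) 1
  sa_mem : ∀ e, sa e = 1 ∨ sa e = -1
  sb_mem : ∀ e, sb e = 1 ∨ sb e = -1
  edge_exists : ∀ v, ∃ e, init e = v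

namespace BoxLikeGIFS

variable {V E : Type*}

/-- The contraction `ψ_e`. -/
def map (S : BoxLikeGIFS V E) (e : E) : ℝ × ℝ → ℝ × ℝ := fun z =>
  if S.diag e then
    (S.sa e * S.a e * z.1 + (S.trans e).1, S.sb e * S.b e * z.2 + (S.trans e).2)
  else
    (S.sa e * S.a e * z.2 + (S.trans e).1, S.sb e * S.b e * z.1 + (S.trans e).2)

def StronglyConnected (S : BoxLikeGIFS V E) : Prop := GraphSC S.init S.term

/-- The open unit square `(0,1)²`. -/
def unitSq : Set (ℝ × ℝ) := Set.Ioo (0 : ℝ) 1 ×ˢ Set.Ioo (0 : ℝ) 1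

/-- The rectangular open set condition. -/
def ROSC (S : BoxLikeGIFS V E) : Prop :=
  (∀ e : E, S.map e '' unitSq ⊆ unitSq) ∧
  ∀ e e' : E, e ≠ e' → S.init e = S.init e' →
    Disjoint (S.map e '' unitSq) (S.map e' '' unitSq)

/-- Positive weights summing to one at each vertex. -/
def IsWeights [Fintype E] (S : BoxLikeGIFS V E) (p : E → ℝ) : Prop :=
  (∀ e, 0 < p e) ∧ ∀ v : V, (∑ e : E, if S.init e = v then p e else 0) = 1

/-- `μ` is the associated graph-directed box-like self-affine measure family. -/
def IsGDMeasure [Fintype E] (S : BoxLikeGIFS V E) (p : E → ℝ)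
    (μ : V → Measure (ℝ × ℝ)) : Prop :=
  (∀ v, IsProbabilityMeasure (μ v)) ∧
  ∀ v : V, μ v =
    ∑ e : E, if S.init e = v then
      ENNReal.ofReal (p e) • ((μ (S.term e)).map (S.map e)) else (0 : Measure (ℝ × ℝ))

/-- `X` is the associated graph-directed self-affine carpet family. -/
def IsGDAttractor (S : BoxLikeGIFS V E) (X : V → Set (ℝ × ℝ)) : Prop :=
  (∀ v, (X v).Nonempty ∧ IsCompact (X v)) ∧
  ∀ v : V, X v = ⋃ e : E, ⋃ _ : S.init e = v, S.map e '' X (S.term e)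

/-- The matrix `F^{(q)}_{x,y}` of the system. -/
def Fmat (S : BoxLikeGIFS V E) (p : E → ℝ) (q x y : ℝ) : Matrix E E ℝ :=
  FmatG S.init S.term p S.a S.b q x y

/-- The `(2#E) × (2#E)` block matrix `𝒢^{(q)}_{x,y}`, indexed by `E × Bool`
(`false` = first index of the block, `true` = second). -/
def Gmat (S : BoxLikeGIFS V E) (p : E → ℝ) (τx τy : V → ℝ) (q x y : ℝ) :
    Matrix (E × Bool) (E × Bool) ℝ := fun i j =>
  if S.term i.1 = S.init j.1 then
    if S.diag j.1 then
      if i.2 = false ∧ j.2 = false then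
        p j.1 ^ q * S.a j.1 ^ (x + τx (S.term j.1)) * S.b j.1 ^ (y - τx (S.term j.1))
      else if i.2 = true ∧ j.2 = true then
        p j.1 ^ q * S.b j.1 ^ (x + τy (S.term j.1)) * S.a j.1 ^ (y - τy (S.term j.1))
      else 0
    else
      if i.2 = false ∧ j.2 = true then
        p j.1 ^ q * S.a j.1 ^ (x + τy (S.term j.1)) * S.b j.1 ^ (y - τy (S.term j.1))
      else if i.2 = true ∧ j.2 = false then
        p j.1 ^ q * S.b j.1 ^ (x + τx (S.term j.1)) * S.a j.1 ^ (y - τx (S.term j.1))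
      else 0
  else 0

/-! ### Words -/

/-- An admissible word: consecutive edges are composable. -/
def Admissible (S : BoxLikeGIFS V E) (w : List E) : Prop :=
  List.Chain' (fun e e' => S.term e = S.init e') w

/-- `(c_w, d_w)`: width and height of the rectangle `ψ_w([0,1]²)`. -/
def wdims (S : BoxLikeGIFS V E) : List E → ℝ × ℝ
  | [] => (1, 1)
  | e :: w =>
      if S.diag e then (S.a e * (wdims S w).1, S.b e * (wdims S w).2)
      else (S.a e * (wdims S w).2, S.b e * (wdims S w).1)

/-- Whether `T_w` is diagonal (`true`) or anti-diagonal (`false`). -/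
def wordDiag (S : BoxLikeGIFS V E) : List E → Bool
  | [] => true
  | e :: w => S.diag e == wordDiag S w

/-- The larger singular value `α₁(w) = max(c_w, d_w)` of `T_w`. -/
def alpha1 (S : BoxLikeGIFS V E) (w : List E) : ℝ := max (S.wdims w).1 (S.wdims w).2

/-- The smaller singular value `α₂(w) = min(c_w, d_w)` of `T_w`. -/
def alpha2 (S : BoxLikeGIFS V E) (w : List E) : ℝ := min (S.wdims w).1 (S.wdims w).2

/-- Initial vertex of a (nonempty) word. -/
def wordInit [Nonempty V] (S : BoxLikeGIFS V E) (w : List E) : V :=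
  (w.head?.map S.init).getD (Classical.arbitrary V)

/-- Terminal vertex of a (nonempty) word. -/
def wordTerm [Nonempty V] (S : BoxLikeGIFS V E) (w : List E) : V :=
  (w.getLast?.map S.term).getD (Classical.arbitrary V)

/-- `p_w = p_{w_1} ⋯ p_{w_k}`. -/
def wordProb (p : E → ℝ) (w : List E) : ℝ := (w.map p).prod

/-- `τ_w(q)`: given the values `τx v`, `τy v` of the `L^q`-spectra of the two coordinate
projections of `μ_v`, this is the `L^q`-spectrum of the projection of `μ_{t(w)} ∘ ψ_w⁻¹`
onto the longest side of `ψ_w([0,1]²)`, i.e. `τx (t w)` if `π_w = π_x` and `τy (t w)`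
otherwise. -/
def wordTau [Nonempty V] (S : BoxLikeGIFS V E) (τx τy : V → ℝ) (w : List E) : ℝ :=
  if ((S.wdims w).2 ≤ (S.wdims w).1 ↔ S.wordDiag w = true) then τx (S.wordTerm w)
  else τy (S.wordTerm w)

/-- The modified singular value function
`φ^{s,q}(w) = p_w^q α₁(w)^{τ_w(q)} α₂(w)^{s - τ_w(q)}`. -/
def msvf [Nonempty V] (S : BoxLikeGIFS V E) (p : E → ℝ) (τx τy : V → ℝ)
    (s q : ℝ) (w : List E) : ℝ :=
  wordProb p w ^ q * S.alpha1 w ^ (S.wordTau τx τy w) *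
    S.alpha2 w ^ (s - S.wordTau τx τy w)

/-- The modified singular value function matrix `A_k^{s,q}`. -/
def Amat [Nonempty V] [Fintype E] (S : BoxLikeGIFS V E) (p : E → ℝ) (τx τy : V → ℝ)
    (s q : ℝ) (k : ℕ) : Matrix V V ℝ := fun v v' =>
  ∑ f : Fin k → E,
    if S.Admissible (List.ofFn f) ∧ S.wordInit (List.ofFn f) = v ∧
        S.wordTerm (List.ofFn f) = v'
    then S.msvf p τx τy s q (List.ofFn f) else 0

/-- The family `E^*_δ` of admissible words whose shortest side drops below `δ`
exactly at the last letter. -/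
def EstarDelta (S : BoxLikeGIFS V E) (δ : ℝ) : Set (List E) :=
  {w | w ≠ [] ∧ S.Admissible w ∧ S.alpha2 w < δ ∧ δ ≤ S.alpha2 w.dropLast}

end BoxLikeGIFS

/-! ### Partition of the projections, for the splitting proposition -/

/-- The projection family: `(v, false) ↦ μ_v^x` and `(v, true) ↦ μ_v^y`. -/
def projMeas {V : Type*} (μ : V → Measure (ℝ × ℝ)) (i : V × Bool) : Measure ℝ :=
  if i.2 then (μ i.1).map Prod.snd else (μ i.1).map Prod.fst

/-- `A`, `B` is a partition of the projection family `{μ_v^x, μ_v^y}_v` into two disjoint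
families of cardinality `#V`, on each of which the `L^q`-spectra exist and share a common
value, and which splits `{μ_v^x, μ_v^y}` for each `v`. -/
def GoodPartition {V : Type*} [Fintype V] (μ : V → Measure (ℝ × ℝ))
    (A B : Finset (V × Bool)) : Prop :=
  Disjoint A B ∧ A ∪ B = Finset.univ ∧
  A.card = Fintype.card V ∧ B.card = Fintype.card V ∧
  ∃ τA τB : ℝ → ℝ,
    (∀ q : ℝ, 0 ≤ q → ∀ i ∈ A, HasLq1 (projMeas μ i) q (τA q)) ∧
    (∀ q : ℝ, 0 ≤ q → ∀ i ∈ B, HasLq1 (projMeas μ i) q (τB q)) ∧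
    ∀ v : V, ((v, false) ∈ A ∧ (v, true) ∈ B) ∨ ((v, false) ∈ B ∧ (v, true) ∈ A)

end LqGIFS

end

open LqGIFS MeasureTheory Filter Set

namespace LqGIFS

/-! ### Submultiplicative sequences -/

/-- Fekete's lemma for submultiplicative sequences. -/
theorem exists_tendsto_log_div_of_submul {u : ℕ → ℝ} {c : ℝ} (hc : 0 < c)
    (hu : ∀ n, c ^ n ≤ u n) (h : ∀ k l, u (k + l) ≤ u k * u l) :
    ∃ L, Tendsto (fun n : ℕ => Real.log (u n) / n) atTop (nhds L) := by
  have hpos : ∀ n, 0 < u n := fun n => (pow_pos hc n).trans_le (hu n)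
  have hsub : Subadditive fun n => Real.log (u n) := fun k l => by
    rw [← Real.log_mul (hpos k).ne' (hpos l).ne']
    exact Real.log_le_log (hpos _) (h k l)
  refine ⟨_, hsub.tendsto_lim ⟨min 0 (Real.log c), ?_⟩⟩
  rintro _ ⟨n, rfl⟩
  rcases Nat.eq_zero_or_pos n with rfl | hn
  · simp
  · have hn' : (0 : ℝ) < n := by exact_mod_cast hn
    refine (min_le_right _ _).trans ((le_div_iff₀ hn').2 ?_)
    rw [mul_comm, ← Real.log_pow]
    exact Real.log_le_log (pow_pos hc n) (hu n)

/-- Fekete's lemma for sequences supermultiplicative up to a constant. -/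
theorem exists_tendsto_log_div_of_supermul {u : ℕ → ℝ} {c C : ℝ} (hc : 0 < c) (hC : 0 < C)
    (hpos : ∀ n, 0 < u n) (hu : ∀ n, u n ≤ C ^ n)
    (h : ∀ k l, c * (u k * u l) ≤ u (k + l)) :
    ∃ L, Tendsto (fun n : ℕ => Real.log (u n) / n) atTop (nhds L) := by
  obtain ⟨d, hd, hd1, hdc⟩ : ∃ d : ℝ, 0 < d ∧ d ≤ 1 ∧ d ≤ c :=
    ⟨min 1 c, lt_min one_pos hc, min_le_left _ _, min_le_right _ _⟩
  obtain ⟨L, hL⟩ := exists_tendsto_log_div_of_submul (u := fun n => (d * u n)⁻¹)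
    (inv_pos.2 hC) (fun n => by
      rw [inv_pow]
      refine inv_anti₀ (mul_pos hd (hpos n)) ((mul_le_of_le_one_left (hpos n).le hd1).trans (hu n)))
    (fun k l => by
      rw [← mul_inv]
      refine inv_anti₀ (mul_pos (mul_pos hd (hpos k)) (mul_pos hd (hpos l))) ?_
      have := mul_le_mul_of_nonneg_right hdc (mul_pos (hpos k) (hpos l)).le
      calc d * u k * (d * u l) = d * (d * (u k * u l)) := by ring
        _ ≤ d * u (k + l) := mul_le_mul_of_nonneg_left (this.trans (h k l)) hd.le)
  refine ⟨-L, ?_⟩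
  have h0 := (tendsto_const_div_atTop_nhds_zero_nat (Real.log d)).add hL
  have h1 := h0.neg
  rw [zero_add] at h1
  refine h1.congr fun n => ?_
  rw [Real.log_inv, Real.log_mul hd.ne' (hpos n).ne']
  ring

/-! ### Monotonicity of `L^q`-spectra under affine images -/

/-- The summand of the moment sum `Dq1`. -/
noncomputable def cubeTerm (ν : Measure ℝ) (δ q : ℝ) (k : ℤ) : ℝ :=
  if ν (meshCube1 δ k) = 0 then 0 else (ν (meshCube1 δ k)).toReal ^ q

theorem Dq1_eq_tsum (ν : Measure ℝ) (δ q : ℝ) : Dq1 ν δ q = ∑' k, cubeTerm ν δ q k := rfl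

theorem cubeTerm_nonneg (ν : Measure ℝ) (δ q : ℝ) (k : ℤ) : 0 ≤ cubeTerm ν δ q k := by
  unfold cubeTerm
  split_ifs
  · exact le_rfl
  · positivity

theorem summable_cubeTerm {ν : Measure ℝ} {R : ℝ} (hR : ν (Set.Icc (-R) R)ᶜ = 0)
    {δ : ℝ} (hδ : 0 < δ) (q : ℝ) : Summable (cubeTerm ν δ q) := by
  refine summable_of_ne_finset_zero (s := Finset.Icc ⌊-R / δ - 1⌋ ⌈R / δ⌉) fun k hk => ?_
  refine if_pos (measure_mono_null (fun x hx => ?_) hR)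
  refine fun hxR : x ∈ Set.Icc (-R) R => hk ?_
  rw [meshCube1, Set.mem_Icc] at hx
  have h1 : -R / δ - 1 ≤ k := by
    rw [sub_le_iff_le_add, div_le_iff₀ hδ]
    linarith [hxR.1]
  have h2 : (k : ℝ) ≤ R / δ := by
    rw [le_div_iff₀ hδ]
    linarith [hxR.2]
  rw [Finset.mem_Icc]
  exact ⟨by exact_mod_cast (Int.floor_le _).trans h1, by exact_mod_cast h2.trans (Int.le_ceil _)⟩

theorem exists_cubeTerm_pos (ν : Measure ℝ) [IsProbabilityMeasure ν] {δ : ℝ} (hδ : 0 < δ)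
    (q : ℝ) : ∃ k, 0 < cubeTerm ν δ q k := by
  have : ∃ k : ℤ, ν (meshCube1 δ k) ≠ 0 := by
    by_contra! h
    have hU : (⋃ k : ℤ, meshCube1 δ k) = Set.univ := by
      refine Set.eq_univ_of_forall fun x => Set.mem_iUnion.2 ⟨⌊x / δ⌋, ?_⟩
      rw [meshCube1, Set.mem_Icc, ← le_div_iff₀ hδ, ← div_le_iff₀ hδ]
      exact ⟨Int.floor_le _, (Int.lt_floor_add_one _).le⟩
    have := measure_iUnion_null h
    rw [hU, measure_univ] at this
    exact one_ne_zero this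
  obtain ⟨k, hk⟩ := this
  refine ⟨k, ?_⟩
  rw [cubeTerm, if_neg hk]
  exact Real.rpow_pos_of_pos (ENNReal.toReal_pos hk (measure_ne_top _ _)) _

/-- If `ν(Q) ≤ p⁻¹ (ρ(Q₁) + ρ(Q₂))` then the same holds for the `q`-th powers, up to a
constant. -/
theorem cubeTerm_le {ν ρ : Measure ℝ} [IsFiniteMeasure ν] [IsFiniteMeasure ρ]
    {p δ δ' q : ℝ} (hp : 0 < p) (hq : 0 ≤ q) {k m n : ℤ}
    (h : ENNReal.ofReal p * ν (meshCube1 δ' k) ≤ ρ (meshCube1 δ m) + ρ (meshCube1 δ n)) :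
    cubeTerm ν δ' q k ≤ (2 / p) ^ q * (cubeTerm ρ δ q m + cubeTerm ρ δ q n) := by
  wlog hmn : ρ (meshCube1 δ n) ≤ ρ (meshCube1 δ m) generalizing m n
  · rw [add_comm (cubeTerm ρ δ q m)]
    exact this (by rwa [add_comm]) (not_le.1 hmn).le
  have hn := cubeTerm_nonneg ρ δ q n
  have hm := cubeTerm_nonneg ρ δ q m
  have h2p : 0 ≤ (2 / p) ^ q := by positivity
  by_cases hk : ν (meshCube1 δ' k) = 0
  · rw [cubeTerm, if_pos hk]
    positivity
  have hpk : 0 < ENNReal.ofReal p * ν (meshCube1 δ' k) :=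
    ENNReal.mul_pos (ENNReal.ofReal_pos.2 hp).ne' hk
  have hm0 : ρ (meshCube1 δ m) ≠ 0 := fun h0 => by
    rw [h0, nonpos_iff_eq_zero] at hmn
    rw [h0, hmn, add_zero] at h
    exact hpk.not_ge h
  have hreal : p * (ν (meshCube1 δ' k)).toReal ≤ 2 * (ρ (meshCube1 δ m)).toReal := by
    have := ENNReal.toReal_mono
      (by simp) (h.trans (add_le_add_right hmn _))
    rwa [ENNReal.toReal_mul, ENNReal.toReal_ofReal hp.le, ← two_mul, ENNReal.toReal_mul] at this
  calc cubeTerm ν δ' q k = (ν (meshCube1 δ' k)).toReal ^ q := if_neg hk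
    _ ≤ (2 / p * (ρ (meshCube1 δ m)).toReal) ^ q := by
        refine Real.rpow_le_rpow ENNReal.toReal_nonneg ?_ hq
        rw [div_mul_eq_mul_div, le_div_iff₀ hp]
        linarith
    _ = (2 / p) ^ q * cubeTerm ρ δ q m := by
        rw [Real.mul_rpow (by positivity) ENNReal.toReal_nonneg, cubeTerm, if_neg hm0]
    _ ≤ _ := mul_le_mul_of_nonneg_left (by linarith) h2p

/-- An affine map of slope `±a` sends each cube of the `δ/a`-mesh into two adjacent cubes of
the `δ`-mesh. -/
theorem exists_equiv_meshCube1_subset {ε a c δ : ℝ} (hε : ε = 1 ∨ ε = -1) (ha : 0 < a)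
    (hδ : 0 < δ) : ∃ σ : ℤ ≃ ℤ, ∀ k,
      meshCube1 (δ / a) k ⊆
        (fun x => ε * a * x + c) ⁻¹' (meshCube1 δ (σ k) ∪ meshCube1 δ (σ k + 1)) := by
  have h1 := (le_div_iff₀ hδ).1 (Int.floor_le (c / δ))
  have h2 := ((div_lt_iff₀ hδ).1 (Int.lt_floor_add_one (c / δ))).le
  have hcov : ∀ (n : ℤ) (y : ℝ), n * δ ≤ y → y ≤ (n + 2) * δ →
      y ∈ meshCube1 δ n ∪ meshCube1 δ (n + 1) := fun n y hy1 hy2 => by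
    rcases le_total y ((n + 1) * δ) with h | h
    · exact Or.inl ⟨hy1, h⟩
    · refine Or.inr ⟨by push_cast; exact h, by push_cast; linarith⟩
  have hx : ∀ (k : ℤ) (x : ℝ), x ∈ meshCube1 (δ / a) k →
      k * δ ≤ a * x ∧ a * x ≤ (k + 1) * δ := fun k x hx => by
    rw [meshCube1, Set.mem_Icc, ← mul_div_assoc, ← mul_div_assoc, div_le_iff₀ ha,
      le_div_iff₀ ha] at hx
    constructor <;> linarith [hx.1, hx.2]
  rcases hε with rfl | rfl
  · refine ⟨Equiv.addRight ⌊c / δ⌋, fun k x hxk => ?_⟩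
    obtain ⟨h3, h4⟩ := hx k x hxk
    apply hcov <;> simp only [Equiv.coe_addRight] <;> push_cast <;> linarith
  · refine ⟨Equiv.subLeft (⌊c / δ⌋ - 1), fun k x hxk => ?_⟩
    obtain ⟨h3, h4⟩ := hx k x hxk
    apply hcov <;> simp only [Equiv.subLeft_apply] <;> push_cast <;> linarith

theorem Dq1_div_le {ν ρ : Measure ℝ} [IsProbabilityMeasure ν] [IsProbabilityMeasure ρ]
    {R : ℝ} (hR : ρ (Set.Icc (-R) R)ᶜ = 0) {p ε a c q : ℝ} (hp : 0 < p)
    (hε : ε = 1 ∨ ε = -1) (ha : 0 < a) (hq : 0 ≤ q)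
    (h : ∀ A, MeasurableSet A → ENNReal.ofReal p * ν ((fun x => ε * a * x + c) ⁻¹' A) ≤ ρ A)
    {δ : ℝ} (hδ : 0 < δ) :
    0 < Dq1 ν (δ / a) q ∧ Dq1 ν (δ / a) q ≤ 2 * (2 / p) ^ q * Dq1 ρ δ q := by
  obtain ⟨σ, hσ⟩ := exists_equiv_meshCube1_subset (c := c) hε ha hδ
  have hmeas : ∀ k, MeasurableSet (meshCube1 δ k) := fun k => measurableSet_Icc
  have hterm : ∀ k, cubeTerm ν (δ / a) q k ≤
      (2 / p) ^ q * (cubeTerm ρ δ q (σ k) + cubeTerm ρ δ q (σ k + 1)) := fun k =>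
    cubeTerm_le hp hq ((mul_le_mul_right (measure_mono (hσ k)) _).trans
      ((h _ ((hmeas _).union (hmeas _))).trans (measure_union_le _ _)))
  have hs := summable_cubeTerm hR hδ q
  rw [Dq1_eq_tsum, Dq1_eq_tsum]
  have hs1 : Summable fun k => cubeTerm ρ δ q (σ k) := hs.comp_injective σ.injective
  have hs2 : Summable fun k => cubeTerm ρ δ q (σ k + 1) :=
    hs.comp_injective ((add_left_injective 1).comp σ.injective)
  have hbound := (hs1.add hs2).mul_left ((2 / p) ^ q)
  have hsν : Summable (cubeTerm ν (δ / a) q) :=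
    Summable.of_nonneg_of_le (cubeTerm_nonneg _ _ _) hterm hbound
  constructor
  · obtain ⟨k, hk⟩ := exists_cubeTerm_pos ν (div_pos hδ ha) q
    exact hsν.tsum_pos (cubeTerm_nonneg _ _ _) k hk
  · have e1 : ∑' k, cubeTerm ρ δ q (σ k) = ∑' k, cubeTerm ρ δ q k := σ.tsum_eq _
    have e2 : ∑' k, cubeTerm ρ δ q (σ k + 1) = ∑' k, cubeTerm ρ δ q k :=
      (σ.tsum_eq fun k => cubeTerm ρ δ q (k + 1)).trans
        ((Equiv.addRight (1 : ℤ)).tsum_eq (cubeTerm ρ δ q))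
    refine (hsν.tsum_le_tsum hterm hbound).trans_eq ?_
    rw [tsum_mul_left, hs1.tsum_add hs2, e1, e2]
    ring

theorem HasLq1.le_of_affine_le {ν ρ : Measure ℝ} [IsProbabilityMeasure ν]
    [IsProbabilityMeasure ρ] {R : ℝ} (hR : ρ (Set.Icc (-R) R)ᶜ = 0) {p ε a c q : ℝ}
    (hp : 0 < p) (hε : ε = 1 ∨ ε = -1) (ha : 0 < a) (hq : 0 ≤ q)
    (h : ∀ A, MeasurableSet A → ENNReal.ofReal p * ν ((fun x => ε * a * x + c) ⁻¹' A) ≤ ρ A)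
    {s t : ℝ} (hs : HasLq1 ν q s) (ht : HasLq1 ρ q t) : s ≤ t := by
  have hlog : Tendsto (fun δ : ℝ => -Real.log δ) (nhdsWithin 0 (Set.Ioi 0)) atTop :=
    tendsto_neg_atBot_atTop.comp Real.tendsto_log_nhdsGT_zero
  have hscale : Tendsto (fun δ : ℝ => δ / a) (nhdsWithin 0 (Set.Ioi 0))
      (nhdsWithin 0 (Set.Ioi 0)) := by
    refine tendsto_nhdsWithin_iff.2 ⟨?_, ?_⟩
    · have : Tendsto (fun δ : ℝ => δ / a) (nhds 0) (nhds (0 / a)) := tendsto_id.div_const a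
      rw [zero_div] at this
      exact this.mono_left nhdsWithin_le_nhds
    · filter_upwards [self_mem_nhdsWithin] with δ hδ using div_pos hδ ha
  have h1 : Tendsto (fun δ : ℝ => 1 + Real.log a / (-Real.log δ))
      (nhdsWithin 0 (Set.Ioi 0)) (nhds (1 + 0)) := (hlog.const_div_atTop _).const_add 1
  have h2 := (hs.comp hscale).mul h1
  have h3 := (hlog.const_div_atTop (Real.log (2 * (2 / p) ^ q))).add ht
  rw [add_zero, mul_one] at h2
  rw [zero_add] at h3
  refine le_of_tendsto_of_tendsto h2 h3 ?_
  filter_upwards [self_mem_nhdsWithin, hlog.eventually_gt_atTop 0,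
    (hlog.comp hscale).eventually_gt_atTop 0] with δ hδ hδ1 hδ2
  obtain ⟨hpos, hle⟩ := Dq1_div_le hR hp hε ha hq h hδ
  have hK : 0 < 2 * (2 / p) ^ q := by positivity
  have hρ : 0 < Dq1 ρ δ q := pos_of_mul_pos_right (hpos.trans_le hle) hK.le
  have hl := Real.log_le_log hpos hle
  rw [Real.log_mul hK.ne' hρ.ne'] at hl
  simp only [Function.comp_apply] at hδ2 ⊢
  have hda : -Real.log (δ / a) = -Real.log δ + Real.log a := by
    rw [Real.log_div (ne_of_gt hδ) ha.ne']
    ring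
  calc _ = Real.log (Dq1 ν (δ / a) q) / (-Real.log δ) := by
        rw [hda] at hδ2 ⊢
        generalize -Real.log δ = X at hδ1 hδ2 ⊢
        field_simp
    _ ≤ _ := by
        rw [← add_div]
        exact div_le_div_of_nonneg_right hl hδ1.le

end LqGIFS

namespace LqGIFS

namespace BoxLikeGIFS

variable {V E : Type*}

/-! ### The measures and their projections -/

theorem nonempty_edge [Nonempty V] (S : BoxLikeGIFS V E) : Nonempty E :=
  (S.edge_exists (Classical.arbitrary V)).nonempty

theorem exists_ratio_bounds [Finite E] [Nonempty E] (S : BoxLikeGIFS V E) :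
    ∃ m r : ℝ, 0 < m ∧ 0 < r ∧ r < 1 ∧
      ∀ e, m ≤ S.a e ∧ m ≤ S.b e ∧ S.a e ≤ r ∧ S.b e ≤ r := by
  obtain ⟨e₀, h₀⟩ := Finite.exists_min fun e => min (S.a e) (S.b e)
  obtain ⟨e₁, h₁⟩ := Finite.exists_max fun e => max (S.a e) (S.b e)
  refine ⟨min (S.a e₀) (S.b e₀), max (S.a e₁) (S.b e₁), lt_min (S.a_mem e₀).1 (S.b_mem e₀).1,
    (S.a_mem e₁).1.trans_le (le_max_left _ _), max_lt (S.a_mem e₁).2 (S.b_mem e₁).2,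
    fun e => ⟨(h₀ e).trans (min_le_left _ _), (h₀ e).trans (min_le_right _ _),
      (le_max_left _ _).trans (h₁ e), (le_max_right _ _).trans (h₁ e)⟩⟩

theorem continuous_map (S : BoxLikeGIFS V E) (e : E) : Continuous (S.map e) := by
  unfold map
  split_ifs <;> fun_prop

theorem norm_map_le (S : BoxLikeGIFS V E) {e : E} {r : ℝ} (ha : S.a e ≤ r) (hb : S.b e ≤ r)
    (z : ℝ × ℝ) : ‖S.map e z‖ ≤ r * ‖z‖ + ‖S.trans e‖ := by
  have key : ∀ {σ c : ℝ} (x t : ℝ), (σ = 1 ∨ σ = -1) → 0 < c → c ≤ r → ‖x‖ ≤ ‖z‖ →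
      ‖t‖ ≤ ‖S.trans e‖ → ‖σ * c * x + t‖ ≤ r * ‖z‖ + ‖S.trans e‖ := by
    intro σ c x t hσ hc hcr hx ht
    have hσ' : ‖σ‖ = 1 := by rcases hσ with rfl | rfl <;> simp
    refine (norm_add_le _ _).trans (add_le_add ?_ ht)
    rw [norm_mul, norm_mul, hσ', one_mul, Real.norm_of_nonneg hc.le]
    exact mul_le_mul hcr hx (norm_nonneg _) (hc.le.trans hcr)
  have hz1 := norm_fst_le z
  have hz2 := norm_snd_le z
  have ht1 := norm_fst_le (S.trans e)
  have ht2 := norm_snd_le (S.trans e)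
  unfold map
  split_ifs <;> rw [Prod.norm_def] <;> refine max_le ?_ ?_
  · exact key _ _ (S.sa_mem e) (S.a_mem e).1 ha hz1 ht1
  · exact key _ _ (S.sb_mem e) (S.b_mem e).1 hb hz2 ht2
  · exact key _ _ (S.sa_mem e) (S.a_mem e).1 ha hz2 ht1
  · exact key _ _ (S.sb_mem e) (S.b_mem e).1 hb hz1 ht2

theorem IsGDMeasure.apply_eq [Fintype E] {S : BoxLikeGIFS V E} {p : E → ℝ}
    {μ : V → Measure (ℝ × ℝ)} (hμ : S.IsGDMeasure p μ) (v : V) {A : Set (ℝ × ℝ)}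
    (hA : MeasurableSet A) :
    μ v A = ∑ e, if S.init e = v then
      ENNReal.ofReal (p e) * μ (S.term e) (S.map e ⁻¹' A) else 0 := by
  conv_lhs => rw [hμ.2 v]
  rw [Measure.finsetSum_apply]
  refine Finset.sum_congr rfl fun e _ => ?_
  split_ifs
  · rw [Measure.smul_apply, Measure.map_apply (S.continuous_map e).measurable hA, smul_eq_mul]
  · simp

theorem IsGDMeasure.edge_le [Fintype E] {S : BoxLikeGIFS V E} {p : E → ℝ}
    {μ : V → Measure (ℝ × ℝ)} (hμ : S.IsGDMeasure p μ) (e : E) {A : Set (ℝ × ℝ)}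
    (hA : MeasurableSet A) :
    ENNReal.ofReal (p e) * μ (S.term e) (S.map e ⁻¹' A) ≤ μ (S.init e) A := by
  rw [hμ.apply_eq _ hA]
  refine le_trans (le_of_eq ?_) (Finset.single_le_sum (fun _ _ => zero_le) (Finset.mem_univ e))
  rw [if_pos rfl]

theorem IsWeights.sum_ofReal [Fintype E] {S : BoxLikeGIFS V E} {p : E → ℝ}
    (hp : S.IsWeights p) (v : V) :
    (∑ e, if S.init e = v then ENNReal.ofReal (p e) else 0) = 1 := by
  rw [← ENNReal.ofReal_one, ← hp.2 v, ENNReal.ofReal_sum_of_nonneg]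
  · refine Finset.sum_congr rfl fun e _ => ?_
    split_ifs <;> simp
  · intro e _
    split_ifs
    exacts [(hp.1 e).le, le_rfl]

/-- The measures of a graph-directed family are supported in a common ball. -/
theorem IsGDMeasure.exists_support_bound [Finite V] [Nonempty V] [Fintype E]
    {S : BoxLikeGIFS V E} {p : E → ℝ} (hp : S.IsWeights p) {μ : V → Measure (ℝ × ℝ)}
    (hμ : S.IsGDMeasure p μ) : ∃ R : ℝ, ∀ v, μ v {z | R < ‖z‖} = 0 := by
  have := S.nonempty_edge
  have := hμ.1
  obtain ⟨_, r, _, hr0, hr1, hr⟩ := S.exists_ratio_bounds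
  obtain ⟨e₁, hM⟩ := Finite.exists_max fun e => ‖S.trans e‖
  set M := ‖S.trans e₁‖
  have hM0 : 0 ≤ M := norm_nonneg _
  set R := M / (1 - r)
  have hR0 : 0 ≤ R := div_nonneg hM0 (by linarith)
  have hR : r * R + M = R := by
    have : (1 - r) ≠ 0 := by linarith
    simp only [R]
    field_simp
    ring
  have hmeas : ∀ t : ℝ, MeasurableSet {z : ℝ × ℝ | t < ‖z‖} := fun t =>
    measurableSet_lt measurable_const measurable_norm
  have hstep : ∀ (η : ENNReal) (x : ℝ), (∀ v, μ v {z | R + x < ‖z‖} ≤ η) →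
      ∀ v, μ v {z | R + r * x < ‖z‖} ≤ η := by
    intro η x hx v
    rw [hμ.apply_eq v (hmeas _)]
    calc _ ≤ ∑ e, (if S.init e = v then ENNReal.ofReal (p e) else 0) * η := by
          refine Finset.sum_le_sum fun e _ => ?_
          split_ifs
          · refine mul_le_mul_right ((measure_mono fun z hz => ?_).trans (hx _)) _
            have h1 : R + r * x < ‖S.map e z‖ := hz
            have h2 := S.norm_map_le (hr e).2.2.1 (hr e).2.2.2 z
            have h3 := hM e
            have h4 : r * (R + x) < r * ‖z‖ := by linarith
            exact lt_of_mul_lt_mul_left h4 hr0.le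
          · simp
      _ = η := by rw [← Finset.sum_mul, hp.sum_ofReal, one_mul]
  have hiter : ∀ (η : ENNReal) (x : ℝ), (∀ v, μ v {z | R + x < ‖z‖} ≤ η) →
      ∀ (n : ℕ) (v : V), μ v {z | R + r ^ n * x < ‖z‖} ≤ η := by
    intro η x hx n
    induction n with
    | zero => simpa using hx
    | succ n ih =>
      intro v
      rw [pow_succ', mul_assoc]
      exact hstep η _ ih v
  have htail : ∀ v, Tendsto (fun n : ℕ => μ v {z | (n : ℝ) < ‖z‖}) atTop (nhds 0) := by
    intro v
    have hempty : (⋂ n : ℕ, {z : ℝ × ℝ | (n : ℝ) < ‖z‖}) = ∅ := by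
      refine Set.eq_empty_of_forall_notMem fun z hz => ?_
      obtain ⟨n, hn⟩ := exists_nat_ge ‖z‖
      exact (Set.mem_iInter.1 hz n).not_ge hn
    rw [← measure_empty (μ := μ v), ← hempty]
    refine tendsto_measure_iInter_atTop (fun n => (hmeas _).nullMeasurableSet)
      (fun m n hmn z hz => ?_) ⟨0, measure_ne_top _ _⟩
    exact lt_of_le_of_lt (Nat.cast_le.2 hmn) (show (n : ℝ) < ‖z‖ from hz)
  refine ⟨R + 1, fun v => nonpos_iff_eq_zero.1 (le_of_forall_gt fun η hη => ?_)⟩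
  obtain ⟨η', hη'0, hη'⟩ := exists_between hη
  have hev : ∀ᶠ n : ℕ in atTop, ∀ v, μ v {z | (n : ℝ) < ‖z‖} ≤ η' :=
    eventually_all.2 fun v => ((htail v).eventually_lt_const hη'0).mono fun _ h => h.le
  obtain ⟨N, hN⟩ := hev.exists
  obtain ⟨n, hn⟩ := pow_unbounded_of_one_lt (N : ℝ) ((one_lt_inv₀ hr0).2 hr1)
  have := hiter η' (r⁻¹ ^ n) (fun v => (measure_mono fun z hz => ?_).trans (hN v)) n v
  · rw [← mul_pow, mul_inv_cancel₀ hr0.ne', one_pow] at this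
    exact this.trans_lt hη'
  · have h1 : R + r⁻¹ ^ n < ‖z‖ := hz
    exact show (N : ℝ) < ‖z‖ by linarith

/-- A function on the two-fold cover of a strongly connected graph that does not increase along
edges is constant along edges. -/
theorem eq_of_le_along_edges {S : BoxLikeGIFS V E} (hSC : S.StronglyConnected)
    {T : V → Bool → ℝ} (hT : ∀ e i, T (S.term e) (!S.diag e ^^ i) ≤ T (S.init e) i)
    (e : E) (i : Bool) : T (S.term e) (!S.diag e ^^ i) = T (S.init e) i := by
  have hpath : ∀ v v', Relation.TransGen (fun u u' => ∃ e, S.init e = u ∧ S.term e = u') v v' →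
      ∃ b : Bool, ∀ i, T v' (b ^^ i) ≤ T v i := by
    intro v v' h
    induction h with
    | single h =>
      obtain ⟨e, rfl, rfl⟩ := h
      exact ⟨_, hT e⟩
    | tail _ h ih =>
      obtain ⟨e, rfl, rfl⟩ := h
      obtain ⟨b, hb⟩ := ih
      refine ⟨!S.diag e ^^ b, fun i => ?_⟩
      rw [Bool.xor_assoc]
      exact (hT e _).trans (hb i)
  obtain ⟨b, hb⟩ := hpath _ _ (hSC (S.term e) (S.init e))
  have hle : ∀ i, T (S.init e) (b ^^ (!S.diag e ^^ i)) ≤ T (S.term e) (!S.diag e ^^ i) :=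
    fun i => hb _
  refine le_antisymm (hT e i) ?_
  have h1 := hle i
  have h2 := hle (!i)
  have h3 := hT e (!i)
  have h4 := hT e i
  generalize S.diag e = d at *
  cases b <;> cases d <;> cases i <;> simp at * <;> linarith

/-- Swapping of the spectra of the coordinate projections along edges. -/
def Compatible (S : BoxLikeGIFS V E) (τx τy : V → ℝ) (t : ℝ) : Prop :=
  (∀ e, (S.diag e = true → τx (S.term e) = τx (S.init e) ∧ τy (S.term e) = τy (S.init e)) ∧
    (S.diag e = false → τy (S.term e) = τx (S.init e) ∧ τx (S.term e) = τy (S.init e))) ∧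
  ∀ v, τx v + τy v = t

theorem compatible_of_hasLq1 [Finite V] [Nonempty V] [Fintype E] {S : BoxLikeGIFS V E}
    (hSC : S.StronglyConnected) {p : E → ℝ} (hp : S.IsWeights p) {μ : V → Measure (ℝ × ℝ)}
    (hμ : S.IsGDMeasure p μ) {q : ℝ} (hq : 0 ≤ q) {τx τy : V → ℝ}
    (hτx : ∀ v, HasLq1 ((μ v).map Prod.fst) q (τx v))
    (hτy : ∀ v, HasLq1 ((μ v).map Prod.snd) q (τy v)) :
    ∃ t, S.Compatible τx τy t := by
  have := hμ.1
  obtain ⟨R, hR⟩ := hμ.exists_support_bound hp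
  have hPx : ∀ v, IsProbabilityMeasure ((μ v).map Prod.fst) := fun v =>
    Measure.isProbabilityMeasure_map measurable_fst.aemeasurable
  have hPy : ∀ v, IsProbabilityMeasure ((μ v).map Prod.snd) := fun v =>
    Measure.isProbabilityMeasure_map measurable_snd.aemeasurable
  have hRx : ∀ v, (μ v).map Prod.fst (Set.Icc (-R) R)ᶜ = 0 := fun v => by
    rw [Measure.map_apply measurable_fst measurableSet_Icc.compl]
    refine measure_mono_null (fun z hz => ?_) (hR v)
    by_contra h
    exact hz (abs_le.1 ((norm_fst_le z).trans (not_lt.1 h)))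
  have hRy : ∀ v, (μ v).map Prod.snd (Set.Icc (-R) R)ᶜ = 0 := fun v => by
    rw [Measure.map_apply measurable_snd measurableSet_Icc.compl]
    refine measure_mono_null (fun z hz => ?_) (hR v)
    by_contra h
    exact hz (abs_le.1 ((norm_snd_le z).trans (not_lt.1 h)))
  have key : ∀ {π π' : ℝ × ℝ → ℝ} {e : E} {σ a c s t : ℝ},
      Measurable π → Measurable π' →
      IsProbabilityMeasure ((μ (S.term e)).map π') →
      IsProbabilityMeasure ((μ (S.init e)).map π) →
      (μ (S.init e)).map π (Set.Icc (-R) R)ᶜ = 0 → (σ = 1 ∨ σ = -1) → 0 < a →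
      (∀ z, π (S.map e z) = σ * a * π' z + c) →
      HasLq1 ((μ (S.term e)).map π') q s → HasLq1 ((μ (S.init e)).map π) q t → s ≤ t := by
    intro π π' e σ a c s t hπ hπ' _ _ hsupp hσ ha hmap hs ht
    refine HasLq1.le_of_affine_le hsupp (hp.1 e) hσ ha hq (c := c) (fun A hA => ?_) hs ht
    have haff : Measurable fun x : ℝ => σ * a * x + c := by fun_prop
    rw [Measure.map_apply hπ hA, Measure.map_apply hπ' (haff hA)]
    refine le_trans (le_of_eq ?_) (hμ.edge_le e (hπ hA))
    congr 2
    ext z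
    simp only [Set.mem_preimage, hmap]
  have hT := eq_of_le_along_edges hSC (T := fun v i => if i then τy v else τx v) (by
    intro e i
    cases hd : S.diag e <;> cases i
    · exact key measurable_fst measurable_snd (hPy _) (hPx _) (hRx _) (S.sa_mem e) (S.a_mem e).1
        (fun z => by simp [map, hd]; rfl) (hτy _) (hτx _)
    · exact key measurable_snd measurable_fst (hPx _) (hPy _) (hRy _) (S.sb_mem e) (S.b_mem e).1
        (fun z => by simp [map, hd]; rfl) (hτx _) (hτy _)
    · exact key measurable_fst measurable_fst (hPx _) (hPx _) (hRx _) (S.sa_mem e) (S.a_mem e).1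
        (fun z => by simp [map, hd]; rfl) (hτx _) (hτx _)
    · exact key measurable_snd measurable_snd (hPy _) (hPy _) (hRy _) (S.sb_mem e) (S.b_mem e).1
        (fun z => by simp [map, hd]; rfl) (hτy _) (hτy _))
  have hedge : ∀ e,
      (S.diag e = true → τx (S.term e) = τx (S.init e) ∧ τy (S.term e) = τy (S.init e)) ∧
      (S.diag e = false → τy (S.term e) = τx (S.init e) ∧ τx (S.term e) = τy (S.init e)) := by
    intro e
    have h1 := hT e false
    have h2 := hT e true
    cases hd : S.diag e <;> simp_all
  refine ⟨τx (Classical.arbitrary V) + τy (Classical.arbitrary V), hedge, fun v => ?_⟩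
  have hsum : ∀ e, τx (S.term e) + τy (S.term e) = τx (S.init e) + τy (S.init e) := fun e => by
    cases hd : S.diag e
    · linarith [((hedge e).2 hd).1, ((hedge e).2 hd).2]
    · linarith [((hedge e).1 hd).1, ((hedge e).1 hd).2]
  have hpath := hSC (Classical.arbitrary V) v
  induction hpath with
  | single h =>
    obtain ⟨e, he, rfl⟩ := h
    rw [hsum, he]
  | tail _ h ih =>
    obtain ⟨e, rfl, rfl⟩ := h
    rw [hsum, ih]

end BoxLikeGIFS

end LqGIFS

namespace LqGIFS

namespace BoxLikeGIFS

variable {V E : Type*}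

/-! ### Singular values of words -/

theorem wdims_append (S : BoxLikeGIFS V E) (w w' : List E) :
    S.wdims (w ++ w') = if S.wordDiag w then
        ((S.wdims w).1 * (S.wdims w').1, (S.wdims w).2 * (S.wdims w').2)
      else ((S.wdims w).1 * (S.wdims w').2, (S.wdims w).2 * (S.wdims w').1) := by
  induction w with
  | nil => simp [wdims, wordDiag]
  | cons e w ih =>
    rw [List.cons_append, wdims, ih, wdims, wordDiag]
    cases S.diag e <;> cases S.wordDiag w <;> simp [mul_assoc]

theorem wdims_mem_Icc (S : BoxLikeGIFS V E) {m r : ℝ} (hm : 0 < m)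
    (h : ∀ e, m ≤ S.a e ∧ m ≤ S.b e ∧ S.a e ≤ r ∧ S.b e ≤ r) (w : List E) :
    (S.wdims w).1 ∈ Set.Icc (m ^ w.length) (r ^ w.length) ∧
      (S.wdims w).2 ∈ Set.Icc (m ^ w.length) (r ^ w.length) := by
  induction w with
  | nil => simp [wdims]
  | cons e w ih =>
    obtain ⟨ha, hb, ha', hb'⟩ := h e
    obtain ⟨⟨h1, h2⟩, h3, h4⟩ := ih
    have hm0 : 0 ≤ m ^ w.length := by positivity
    have hr : 0 ≤ r := (hm.le.trans ha).trans ha'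
    have key : ∀ {c x : ℝ}, m ≤ c → c ≤ r → m ^ w.length ≤ x → x ≤ r ^ w.length →
        c * x ∈ Set.Icc (m * m ^ w.length) (r * r ^ w.length) := fun hc hc' hx hx' =>
      ⟨mul_le_mul hc hx hm0 (hm.le.trans hc), mul_le_mul hc' hx' (hm0.trans hx) hr⟩
    rw [wdims, List.length_cons, pow_succ', pow_succ']
    split_ifs
    · exact ⟨key ha ha' h1 h2, key hb hb' h3 h4⟩
    · exact ⟨key ha ha' h3 h4, key hb hb' h1 h2⟩

theorem wdims_pos (S : BoxLikeGIFS V E) (w : List E) :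
    0 < (S.wdims w).1 ∧ 0 < (S.wdims w).2 := by
  induction w with
  | nil => simp [wdims]
  | cons e w ih =>
    have ha := (S.a_mem e).1
    have hb := (S.b_mem e).1
    rw [wdims]
    split_ifs <;> constructor <;> simp [ha, hb, ih.1, ih.2]

theorem wdims_le_one (S : BoxLikeGIFS V E) (w : List E) :
    (S.wdims w).1 ≤ 1 ∧ (S.wdims w).2 ≤ 1 := by
  induction w with
  | nil => simp [wdims]
  | cons e w ih =>
    have ha := (S.a_mem e).2.le
    have hb := (S.b_mem e).2.le
    obtain ⟨h1, h2⟩ := S.wdims_pos w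
    rw [wdims]
    split_ifs
    · exact ⟨mul_le_one₀ ha h1.le ih.1, mul_le_one₀ hb h2.le ih.2⟩
    · exact ⟨mul_le_one₀ ha h2.le ih.2, mul_le_one₀ hb h1.le ih.1⟩

theorem alpha2_pos (S : BoxLikeGIFS V E) (w : List E) : 0 < S.alpha2 w :=
  lt_min (S.wdims_pos w).1 (S.wdims_pos w).2

theorem alpha2_le_one (S : BoxLikeGIFS V E) (w : List E) : S.alpha2 w ≤ 1 :=
  (min_le_left _ _).trans (S.wdims_le_one w).1

theorem alpha2_mul_le_append (S : BoxLikeGIFS V E) (w w' : List E) :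
    S.alpha2 w * S.alpha2 w' ≤ S.alpha2 (w ++ w') := by
  obtain ⟨h1, h2⟩ := S.wdims_pos w
  have h' := (S.alpha2_pos w').le
  unfold alpha2 at *
  rw [wdims_append]
  split_ifs
  · exact le_min (mul_le_mul (min_le_left _ _) (min_le_left _ _) h' h1.le)
      (mul_le_mul (min_le_right _ _) (min_le_right _ _) h' h2.le)
  · exact le_min (mul_le_mul (min_le_left _ _) (min_le_right _ _) h' h1.le)
      (mul_le_mul (min_le_right _ _) (min_le_left _ _) h' h2.le)

theorem alpha2_append_le (S : BoxLikeGIFS V E) (w w' : List E) :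
    S.alpha2 (w ++ w') ≤ S.alpha2 w := by
  obtain ⟨h1, h2⟩ := S.wdims_pos w
  obtain ⟨h3, h4⟩ := S.wdims_le_one w'
  unfold alpha2
  rw [wdims_append]
  split_ifs
  · exact min_le_min (mul_le_of_le_one_right h1.le h3) (mul_le_of_le_one_right h2.le h4)
  · exact min_le_min (mul_le_of_le_one_right h1.le h4) (mul_le_of_le_one_right h2.le h3)

/-! ### The modified singular value function -/

/-- The weight `p_e^q a_e^{τ_x} b_e^{τ_y}` of an edge, with exponents taken at its initial
vertex. -/
noncomputable def edgeWeight (S : BoxLikeGIFS V E) (p : E → ℝ) (τx τy : V → ℝ) (q : ℝ)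
    (e : E) : ℝ :=
  p e ^ q * S.a e ^ τx (S.init e) * S.b e ^ τy (S.init e)

theorem edgeWeight_pos (S : BoxLikeGIFS V E) {p : E → ℝ} (hp : ∀ e, 0 < p e) (τx τy : V → ℝ)
    (q : ℝ) (e : E) : 0 < S.edgeWeight p τx τy q e :=
  mul_pos (mul_pos (Real.rpow_pos_of_pos (hp e) _) (Real.rpow_pos_of_pos (S.a_mem e).1 _))
    (Real.rpow_pos_of_pos (S.b_mem e).1 _)

theorem wordProb_pos {p : E → ℝ} (hp : ∀ e, 0 < p e) (w : List E) : 0 < wordProb p w :=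
  List.prod_pos fun x hx => by
    obtain ⟨e, -, rfl⟩ := List.mem_map.1 hx
    exact hp e

theorem admissible_append {S : BoxLikeGIFS V E} {w w' : List E} :
    S.Admissible (w ++ w') ↔ S.Admissible w ∧ S.Admissible w' ∧
      ∀ x ∈ w.getLast?, ∀ y ∈ w'.head?, S.term x = S.init y :=
  List.isChain_append

theorem admissible_cons_cons {S : BoxLikeGIFS V E} {e e' : E} {w : List E} :
    S.Admissible (e :: e' :: w) ↔ S.term e = S.init e' ∧ S.Admissible (e' :: w) :=
  List.isChain_cons_cons

theorem wordTerm_cons_cons [Nonempty V] (S : BoxLikeGIFS V E) (e e' : E) (w : List E) :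
    S.wordTerm (e :: e' :: w) = S.wordTerm (e' :: w) := by
  simp [wordTerm, List.getLast?_cons_cons]

theorem tau_wordTerm [Nonempty V] {S : BoxLikeGIFS V E} {τx τy : V → ℝ} {t : ℝ}
    (hc : S.Compatible τx τy t) (w : List E) (e : E) (hw : S.Admissible (e :: w)) :
    (S.wordDiag (e :: w) = true → τx (S.wordTerm (e :: w)) = τx (S.init e) ∧
      τy (S.wordTerm (e :: w)) = τy (S.init e)) ∧
    (S.wordDiag (e :: w) = false → τy (S.wordTerm (e :: w)) = τx (S.init e) ∧
      τx (S.wordTerm (e :: w)) = τy (S.init e)) := by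
  induction w generalizing e with
  | nil =>
    have := hc.1 e
    simpa [wordDiag, wordTerm] using this
  | cons e' w ih =>
    obtain ⟨h1, h2⟩ := admissible_cons_cons.1 hw
    have h3 := ih e' h2
    have h4 := hc.1 e
    rw [wordTerm_cons_cons, wordDiag]
    rw [h1] at h4
    cases hd : S.diag e <;> cases hd' : S.wordDiag (e' :: w) <;> simp_all

theorem prod_edgeWeight {S : BoxLikeGIFS V E} {p : E → ℝ} (hp : ∀ e, 0 < p e) {τx τy : V → ℝ}
    {t : ℝ} (hc : S.Compatible τx τy t) (q : ℝ) (w : List E) (e : E)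
    (hw : S.Admissible (e :: w)) :
    ((e :: w).map (S.edgeWeight p τx τy q)).prod = wordProb p (e :: w) ^ q *
      (S.wdims (e :: w)).1 ^ τx (S.init e) * (S.wdims (e :: w)).2 ^ τy (S.init e) := by
  induction w generalizing e with
  | nil => simp [edgeWeight, wordProb, wdims]
  | cons e' w ih =>
    obtain ⟨h1, h2⟩ := admissible_cons_cons.1 hw
    have h4 := hc.1 e
    rw [h1] at h4
    have ha := (S.a_mem e).1.le
    have hb := (S.b_mem e).1.le
    obtain ⟨hc', hd'⟩ := S.wdims_pos (e' :: w)
    have hdims : S.wdims (e :: e' :: w) =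
        if S.diag e then (S.a e * (S.wdims (e' :: w)).1, S.b e * (S.wdims (e' :: w)).2)
        else (S.a e * (S.wdims (e' :: w)).2, S.b e * (S.wdims (e' :: w)).1) := rfl
    have hP : wordProb p (e :: e' :: w) = p e * wordProb p (e' :: w) := by
      simp [wordProb]
    rw [List.map_cons, List.prod_cons, ih e' h2, hP, hdims,
      Real.mul_rpow (hp e).le (wordProb_pos hp _).le, edgeWeight]
    cases hd : S.diag e
    · rw [← (h4.2 hd).1, ← (h4.2 hd).2]
      simp only [Bool.false_eq_true, if_false]
      rw [Real.mul_rpow ha hd'.le, Real.mul_rpow hb hc'.le]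
      ring
    · rw [← (h4.1 hd).1, ← (h4.1 hd).2]
      simp only [if_true]
      rw [Real.mul_rpow ha hc'.le, Real.mul_rpow hb hd'.le]
      ring

/-- The product of a multiplicative function of the word and a power of `α₂`. -/
noncomputable def wordWeight (S : BoxLikeGIFS V E) (h : E → ℝ) (r : ℝ) (w : List E) : ℝ :=
  (w.map h).prod * S.alpha2 w ^ r

theorem msvf_eq_wordWeight [Nonempty V] {S : BoxLikeGIFS V E} {p : E → ℝ}
    (hp : ∀ e, 0 < p e) {τx τy : V → ℝ} {t : ℝ} (hc : S.Compatible τx τy t) (s q : ℝ)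
    {w : List E} (hw : S.Admissible w) :
    S.msvf p τx τy s q w = S.wordWeight (S.edgeWeight p τx τy q) (s - t) w := by
  cases w with
  | nil => simp [msvf, wordWeight, wordProb, alpha1, alpha2, wdims]
  | cons e w =>
    obtain ⟨h1, h2⟩ := tau_wordTerm hc w e hw
    obtain ⟨hx, hy⟩ := S.wdims_pos (e :: w)
    have ht := hc.2 (S.init e)
    rw [msvf, wordWeight, prod_edgeWeight hp hc q w e hw]
    have hτ : S.wordTau τx τy (e :: w) =
        if (S.wdims (e :: w)).2 ≤ (S.wdims (e :: w)).1 then τx (S.init e) else τy (S.init e) := by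
      rw [wordTau]
      cases hd : S.wordDiag (e :: w) <;> by_cases hle : (S.wdims (e :: w)).2 ≤ (S.wdims (e :: w)).1
        <;> simp_all
    rw [hτ, alpha1, alpha2]
    by_cases hle : (S.wdims (e :: w)).2 ≤ (S.wdims (e :: w)).1
    · rw [if_pos hle, max_eq_left hle, min_eq_right hle, mul_assoc _ (_ ^ τy _),
        ← Real.rpow_add hy]
      congr 2
      linarith
    · have hle' := (not_le.1 hle).le
      rw [if_neg hle, max_eq_right hle', min_eq_left hle', mul_right_comm _ (_ ^ τx _),
        mul_assoc _ (_ ^ τx _), ← Real.rpow_add hx]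
      congr 2
      linarith

section WordWeight

variable {S : BoxLikeGIFS V E} {h : E → ℝ}

theorem prod_map_pos (hh : ∀ e, 0 < h e) (w : List E) : 0 < (w.map h).prod :=
  wordProb_pos hh w

theorem wordWeight_pos (hh : ∀ e, 0 < h e) (r : ℝ) (w : List E) : 0 < S.wordWeight h r w :=
  mul_pos (prod_map_pos hh w) (Real.rpow_pos_of_pos (S.alpha2_pos w) _)

theorem wordWeight_append_le (hh : ∀ e, 0 < h e) {r : ℝ} (hr : r ≤ 0) (w w' : List E) :
    S.wordWeight h r (w ++ w') ≤ S.wordWeight h r w * S.wordWeight h r w' := by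
  have h1 := Real.rpow_le_rpow_of_nonpos (mul_pos (S.alpha2_pos w) (S.alpha2_pos w'))
    (S.alpha2_mul_le_append w w') hr
  rw [Real.mul_rpow (S.alpha2_pos w).le (S.alpha2_pos w').le] at h1
  rw [wordWeight, wordWeight, wordWeight, List.map_append, List.prod_append, mul_mul_mul_comm]
  exact mul_le_mul_of_nonneg_left h1 (mul_pos (prod_map_pos hh w) (prod_map_pos hh w')).le

theorem le_wordWeight_append (hh : ∀ e, 0 < h e) {r : ℝ} (hr : 0 ≤ r) (w w' : List E) :
    S.wordWeight h r w * S.wordWeight h r w' ≤ S.wordWeight h r (w ++ w') := by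
  have h1 := Real.rpow_le_rpow (mul_pos (S.alpha2_pos w) (S.alpha2_pos w')).le
    (S.alpha2_mul_le_append w w') hr
  rw [Real.mul_rpow (S.alpha2_pos w).le (S.alpha2_pos w').le] at h1
  rw [wordWeight, wordWeight, wordWeight, List.map_append, List.prod_append, mul_mul_mul_comm]
  exact mul_le_mul_of_nonneg_left h1 (mul_pos (prod_map_pos hh w) (prod_map_pos hh w')).le

theorem wordWeight_append_le_mul_prod (hh : ∀ e, 0 < h e) {r : ℝ} (hr : 0 ≤ r)
    (w w' : List E) :
    S.wordWeight h r (w ++ w') ≤ S.wordWeight h r w * (w'.map h).prod := by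
  rw [wordWeight, wordWeight, List.map_append, List.prod_append, mul_right_comm]
  refine mul_le_mul_of_nonneg_right (mul_le_mul_of_nonneg_left ?_ (prod_map_pos hh w).le)
    (prod_map_pos hh w').le
  exact Real.rpow_le_rpow (S.alpha2_pos _).le (S.alpha2_append_le w w') hr

end WordWeight

theorem exists_connecting_word [Nonempty V] {S : BoxLikeGIFS V E} (hSC : S.StronglyConnected)
    (v v' : V) : ∃ z : List E, S.Admissible z ∧ z ≠ [] ∧ (∀ e ∈ z.head?, S.init e = v) ∧
      ∀ e ∈ z.getLast?, S.term e = v' := by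
  have hpath := hSC v v'
  induction hpath with
  | single h =>
    obtain ⟨e, rfl, rfl⟩ := h
    exact ⟨[e], List.isChain_singleton e, by simp, by simp, by simp⟩
  | tail _ h ih =>
    obtain ⟨e, rfl, rfl⟩ := h
    obtain ⟨z, h1, h2, h3, h4⟩ := ih
    refine ⟨z ++ [e], admissible_append.2 ⟨h1, List.isChain_singleton e, ?_⟩, by simp, ?_, by simp⟩
    · intro x hx y hy
      rw [h4 x hx]
      simp_all
    · intro x hx
      rw [List.head?_append_of_ne_nil _ h2] at hx
      exact h3 x hx

/-! ### Sums over words -/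

section WordSum

variable [Fintype E]

/-- The admissible words of length `k`. -/
noncomputable def words (S : BoxLikeGIFS V E) (k : ℕ) : Finset (List E) :=
  (Finset.univ.image (List.ofFn : (Fin k → E) → List E)).filter S.Admissible

theorem mem_words {S : BoxLikeGIFS V E} {k : ℕ} {w : List E} :
    w ∈ S.words k ↔ w.length = k ∧ S.Admissible w := by
  rw [words, Finset.mem_filter, Finset.mem_image]
  refine and_congr_left fun _ => ⟨?_, ?_⟩
  · rintro ⟨f, -, rfl⟩
    exact List.length_ofFn
  · rintro rfl
    exact ⟨w.get, Finset.mem_univ _, List.ofFn_get w⟩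

theorem words_nonempty [Nonempty V] (S : BoxLikeGIFS V E) (k : ℕ) : (S.words k).Nonempty := by
  suffices h : ∀ k (v : V), ∃ w : List E, w.length = k ∧ S.Admissible w ∧
      ∀ e ∈ w.head?, S.init e = v by
    obtain ⟨w, h1, h2, -⟩ := h k (Classical.arbitrary V)
    exact ⟨w, mem_words.2 ⟨h1, h2⟩⟩
  intro k
  induction k with
  | zero => exact fun v => ⟨[], rfl, List.isChain_nil, by simp⟩
  | succ k ih =>
    intro v
    obtain ⟨e, he⟩ := S.edge_exists v
    obtain ⟨w, h1, h2, h3⟩ := ih (S.term e)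
    refine ⟨e :: w, by simp [h1], ?_, by simpa using he⟩
    refine List.isChain_cons.2 ⟨fun e' he' => (h3 e' he').symm, h2⟩

theorem mnorm_Amat [Fintype V] [Nonempty V] {S : BoxLikeGIFS V E} {p : E → ℝ}
    (hp : ∀ e, 0 < p e) {τx τy : V → ℝ} {t : ℝ} (hc : S.Compatible τx τy t) (s q : ℝ) (k : ℕ) :
    mnorm (S.Amat p τx τy s q k) =
      ∑ w ∈ S.words k, S.wordWeight (S.edgeWeight p τx τy q) (s - t) w := by
  have hnn : ∀ v v' (f : Fin k → E), 0 ≤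
      if S.Admissible (List.ofFn f) ∧ S.wordInit (List.ofFn f) = v ∧
        S.wordTerm (List.ofFn f) = v'
      then S.msvf p τx τy s q (List.ofFn f) else 0 := by
    intro v v' f
    split_ifs with hf
    · rw [msvf_eq_wordWeight hp hc s q hf.1]
      exact (wordWeight_pos (S.edgeWeight_pos hp τx τy q) _ _).le
    · exact le_rfl
  have habs : ∀ v v', |S.Amat p τx τy s q k v v'| = S.Amat p τx τy s q k v v' := fun v v' =>
    abs_of_nonneg (Finset.sum_nonneg fun f _ => hnn v v' f)
  simp only [mnorm, habs]
  simp only [Amat]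
  have hswap : ∀ v, ∑ v', ∑ f : Fin k → E,
      (if S.Admissible (List.ofFn f) ∧ S.wordInit (List.ofFn f) = v ∧
        S.wordTerm (List.ofFn f) = v'
      then S.msvf p τx τy s q (List.ofFn f) else 0) = ∑ f : Fin k → E,
      if S.wordInit (List.ofFn f) = v then
        if S.Admissible (List.ofFn f) then S.msvf p τx τy s q (List.ofFn f) else 0
      else 0 := by
    intro v
    rw [Finset.sum_comm]
    refine Finset.sum_congr rfl fun f _ => ?_
    by_cases h1 : S.Admissible (List.ofFn f) <;> by_cases h2 : S.wordInit (List.ofFn f) = v <;>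
      simp [h1, h2]
  simp only [hswap]
  rw [Finset.sum_comm, words, Finset.sum_filter, Finset.sum_image List.ofFn_injective.injOn]
  refine Finset.sum_congr rfl fun f _ => ?_
  rw [Finset.sum_ite_eq, if_pos (Finset.mem_univ _)]
  split_ifs with hf
  · exact msvf_eq_wordWeight hp hc s q hf
  · rfl

theorem _root_.Finset.sum_le_sum_of_injOn {α β : Type*} {s : Finset α} {t : Finset β}
    {f : α → ℝ} {g : β → ℝ} (i : α → β) (hi : ∀ a ∈ s, i a ∈ t) (hinj : Set.InjOn i s)
    (hfg : ∀ a ∈ s, f a ≤ g (i a)) (hg : ∀ b ∈ t, 0 ≤ g b) :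
    ∑ a ∈ s, f a ≤ ∑ b ∈ t, g b :=
  calc ∑ a ∈ s, f a ≤ ∑ a ∈ s, g (i a) := Finset.sum_le_sum hfg
    _ = ∑ b ∈ s.image i, g b := (Finset.sum_image hinj).symm
    _ ≤ _ := Finset.sum_le_sum_of_subset_of_nonneg (Finset.image_subset_iff.2 hi)
      fun b hb _ => hg b hb

theorem sum_words_add_le (S : BoxLikeGIFS V E) {f g F : List E → ℝ} (hf : ∀ w, 0 ≤ f w)
    (hg : ∀ w, 0 ≤ g w) (hF : ∀ w w', F (w ++ w') ≤ f w * g w') (k l : ℕ) :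
    ∑ w ∈ S.words (k + l), F w ≤ (∑ w ∈ S.words k, f w) * ∑ w ∈ S.words l, g w := by
  rw [Finset.sum_mul_sum, ← Finset.sum_product']
  refine Finset.sum_le_sum_of_injOn (fun w => (w.take k, w.drop k)) ?_ ?_ ?_
    fun _ _ => mul_nonneg (hf _) (hg _)
  · intro w hw
    obtain ⟨h1, h2⟩ := mem_words.1 hw
    rw [← List.take_append_drop k w, admissible_append] at h2
    exact Finset.mem_product.2 ⟨mem_words.2 ⟨by simp [h1], h2.1⟩,
      mem_words.2 ⟨by simp [h1], h2.2.1⟩⟩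
  · intro w _ w' _ h
    obtain ⟨h1, h2⟩ := Prod.mk.inj h
    rw [← List.take_append_drop k w, h1, h2, List.take_append_drop]
  · intro w _
    have := hF (w.take k) (w.drop k)
    rwa [List.take_append_drop] at this

/-- Supermultiplicativity, up to a constant, of the sums over words. -/
theorem exists_mul_sum_words_le [Finite V] [Nonempty V] {S : BoxLikeGIFS V E}
    (hSC : S.StronglyConnected) {h : E → ℝ} (hh : ∀ e, 0 < h e) {r : ℝ} (hr : 0 ≤ r) :
    ∃ c : ℝ, 0 < c ∧ ∀ k l, c * ((∑ w ∈ S.words k, S.wordWeight h r w) *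
      ∑ w ∈ S.words l, S.wordWeight h r w) ≤ ∑ w ∈ S.words (k + l), S.wordWeight h r w := by
  choose z hz hz0 hz1 hz2 using exists_connecting_word hSC
  obtain ⟨x₀, hx₀⟩ := Finite.exists_min fun x : V × V => S.wordWeight h r (z x.1 x.2)
  obtain ⟨x₁, hx₁⟩ := Finite.exists_max fun x : V × V => (z x.1 x.2).length
  set κ := S.wordWeight h r (z x₀.1 x₀.2)
  set N := (z x₁.1 x₁.2).length
  have hκ : 0 < κ := wordWeight_pos hh _ _
  have hw0 : ∀ w, 0 < S.wordWeight h r w := wordWeight_pos hh r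
  set H := ∑ j ∈ Finset.range (N + 1), ∑ w ∈ S.words j, (w.map h).prod
  have hH : 0 < H := Finset.sum_pos (fun j _ => Finset.sum_pos (fun w _ => prod_map_pos hh w)
    (S.words_nonempty j)) ⟨0, by simp⟩
  refine ⟨κ / H, div_pos hκ hH, fun k l => ?_⟩
  rw [div_mul_eq_mul_div, div_le_iff₀ hH]
  calc κ * ((∑ w ∈ S.words k, S.wordWeight h r w) * ∑ w ∈ S.words l, S.wordWeight h r w)
      = ∑ x ∈ S.words k ×ˢ S.words l, κ * (S.wordWeight h r x.1 * S.wordWeight h r x.2) := by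
        rw [Finset.sum_mul_sum, ← Finset.sum_product', Finset.mul_sum]
    _ ≤ ∑ w ∈ (Finset.range (N + 1)).biUnion fun j => S.words (k + l + j),
          S.wordWeight h r w := by
        refine Finset.sum_le_sum_of_injOn
          (fun x => x.1 ++ (z (S.wordTerm x.1) (S.wordInit x.2) ++ x.2)) ?_ ?_ ?_
          fun w _ => (hw0 w).le
        · rintro ⟨w, w'⟩ hx
          obtain ⟨hw, hw'⟩ := Finset.mem_product.1 hx
          obtain ⟨hk, hw⟩ := mem_words.1 hw
          obtain ⟨hl, hw'⟩ := mem_words.1 hw'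
          refine Finset.mem_biUnion.2 ⟨(z (S.wordTerm w) (S.wordInit w')).length,
            Finset.mem_range.2 (Nat.lt_succ_of_le (hx₁ (_, _))), mem_words.2 ⟨?_, ?_⟩⟩
          · simp only [List.length_append] at *
            omega
          · refine admissible_append.2 ⟨hw, admissible_append.2 ⟨hz _ _, hw', ?_⟩, ?_⟩
            · intro x hx y hy
              rw [hz2 _ _ x hx, wordInit, Option.mem_def.1 hy]
              rfl
            · intro x hx y hy
              rw [List.head?_append_of_ne_nil _ (hz0 _ _)] at hy
              rw [hz1 _ _ y hy, wordTerm, Option.mem_def.1 hx]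
              rfl
        · rintro ⟨w₁, w₁'⟩ h1 ⟨w₂, w₂'⟩ h2 heq
          obtain ⟨ha, hb⟩ := Finset.mem_product.1 h1
          obtain ⟨hc, hd⟩ := Finset.mem_product.1 h2
          obtain ⟨e1, e2⟩ := List.append_inj heq
            ((mem_words.1 ha).1.trans (mem_words.1 hc).1.symm)
          obtain ⟨-, e3⟩ := List.append_inj' e2
            ((mem_words.1 hb).1.trans (mem_words.1 hd).1.symm)
          exact Prod.ext e1 e3
        · rintro ⟨w, w'⟩ -
          refine le_trans ?_ (le_wordWeight_append hh hr _ _)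
          have h1 := (mul_le_mul_of_nonneg_right (hx₀ (S.wordTerm w, S.wordInit w'))
            (hw0 w').le).trans (le_wordWeight_append hh hr _ _)
          have h2 := mul_le_mul_of_nonneg_left h1 (hw0 w).le
          calc _ = S.wordWeight h r w * (κ * S.wordWeight h r w') := by ring
            _ ≤ _ := h2
    _ ≤ ∑ j ∈ Finset.range (N + 1), ∑ w ∈ S.words (k + l + j), S.wordWeight h r w :=
        (Finset.sum_biUnion fun i _ j _ hij => Finset.disjoint_left.2 fun w hi hj => hij
          (Nat.add_left_cancel ((mem_words.1 hi).1.symm.trans (mem_words.1 hj).1))).le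
    _ ≤ ∑ j ∈ Finset.range (N + 1), (∑ w ∈ S.words (k + l), S.wordWeight h r w) *
          ∑ w ∈ S.words j, (w.map h).prod :=
        Finset.sum_le_sum fun j _ => S.sum_words_add_le (fun w => (hw0 w).le)
          (fun w => (prod_map_pos hh w).le) (wordWeight_append_le_mul_prod hh hr) _ _
    _ = _ := by rw [← Finset.mul_sum]

end WordSum

end BoxLikeGIFS

end LqGIFS

namespace LqGIFS

namespace BoxLikeGIFS

/-! ### The pressure -/

theorem wordWeight_add {V E : Type*} [Nonempty V] {S : BoxLikeGIFS V E} {h : E → ℝ}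
    (hh : ∀ e, 0 < h e) {m ρ : ℝ} (hm : 0 < m)
    (hb : ∀ e, m ≤ S.a e ∧ m ≤ S.b e ∧ S.a e ≤ ρ ∧ S.b e ≤ ρ) (r : ℝ) {d : ℝ} (hd : 0 ≤ d)
    (w : List E) :
    (m ^ d) ^ w.length * S.wordWeight h r w ≤ S.wordWeight h (r + d) w ∧
      S.wordWeight h (r + d) w ≤ (ρ ^ d) ^ w.length * S.wordWeight h r w := by
  have := S.nonempty_edge
  have hρ : 0 ≤ ρ := by
    obtain ⟨h1, -, h2, -⟩ := hb (Classical.arbitrary E)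
    exact hm.le.trans (h1.trans h2)
  obtain ⟨⟨h1, h2⟩, h3, h4⟩ := S.wdims_mem_Icc hm hb w
  have hlow : m ^ w.length ≤ S.alpha2 w := le_min h1 h3
  have hupp : S.alpha2 w ≤ ρ ^ w.length := (min_le_left _ _).trans h2
  have hsplit : S.wordWeight h (r + d) w = S.alpha2 w ^ d * S.wordWeight h r w := by
    rw [wordWeight, wordWeight, Real.rpow_add (S.alpha2_pos w)]
    ring
  have hw := (wordWeight_pos (S := S) hh r w).le
  rw [hsplit, Real.rpow_pow_comm hm.le, Real.rpow_pow_comm hρ]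
  exact ⟨mul_le_mul_of_nonneg_right (Real.rpow_le_rpow (by positivity) hlow hd) hw,
    mul_le_mul_of_nonneg_right (Real.rpow_le_rpow (S.alpha2_pos w).le hupp hd) hw⟩

theorem log_div_bounds {u v a b : ℝ} (hu : 0 < u) (ha : 0 < a) (hb : 0 < b) {k : ℕ}
    (hk : k ≠ 0) (h1 : a ^ k * u ≤ v) (h2 : v ≤ b ^ k * u) :
    Real.log a + Real.log u / k ≤ Real.log v / k ∧
      Real.log v / k ≤ Real.log b + Real.log u / k := by
  have hk' : (k : ℝ) ≠ 0 := Nat.cast_ne_zero.2 hk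
  have hlog : ∀ {c : ℝ}, 0 < c → Real.log c + Real.log u / k = Real.log (c ^ k * u) / k := by
    intro c hc
    rw [Real.log_mul (pow_pos hc k).ne' hu.ne', Real.log_pow]
    field_simp
  have hau : 0 < a ^ k * u := mul_pos (pow_pos ha k) hu
  rw [hlog ha, hlog hb]
  exact ⟨div_le_div_of_nonneg_right (Real.log_le_log hau h1) k.cast_nonneg,
    div_le_div_of_nonneg_right (Real.log_le_log (hau.trans_le h1) h2) k.cast_nonneg⟩

section Pressure

variable {V E : Type*} [Fintype E] [Nonempty V] {S : BoxLikeGIFS V E} {h : E → ℝ}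

theorem sum_words_pos (hh : ∀ e, 0 < h e) (r : ℝ) (k : ℕ) :
    0 < ∑ w ∈ S.words k, S.wordWeight h r w :=
  Finset.sum_pos (fun w _ => wordWeight_pos hh r w) (S.words_nonempty k)

theorem exists_pow_le_sum_words (hh : ∀ e, 0 < h e) {r : ℝ} (hr : r ≤ 0) :
    ∃ c : ℝ, 0 < c ∧ ∀ k, c ^ k ≤ ∑ w ∈ S.words k, S.wordWeight h r w := by
  have := S.nonempty_edge
  obtain ⟨e₀, he₀⟩ := Finite.exists_min h
  refine ⟨h e₀, hh e₀, fun k => ?_⟩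
  obtain ⟨w, hw⟩ := S.words_nonempty k
  refine le_trans ?_
    (Finset.single_le_sum (fun w _ => (wordWeight_pos (S := S) hh r w).le) hw)
  have hprod : ∀ w : List E, h e₀ ^ w.length ≤ (w.map h).prod := by
    intro w
    induction w with
    | nil => simp
    | cons e w ih =>
      rw [List.length_cons, pow_succ', List.map_cons, List.prod_cons]
      exact mul_le_mul (he₀ e) ih (pow_nonneg (hh e₀).le _) (hh e).le
  rw [← (mem_words.1 hw).1]
  exact (hprod w).trans (le_mul_of_one_le_right (prod_map_pos hh w).le
    (Real.one_le_rpow_of_pos_of_le_one_of_nonpos (S.alpha2_pos w) (S.alpha2_le_one w) hr))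

theorem exists_sum_words_le_pow (hh : ∀ e, 0 < h e) {r : ℝ} (hr : 0 ≤ r) :
    ∃ C : ℝ, 0 < C ∧ ∀ k, ∑ w ∈ S.words k, S.wordWeight h r w ≤ C ^ k := by
  refine ⟨∑ w ∈ S.words 1, (w.map h).prod,
    Finset.sum_pos (fun w _ => prod_map_pos hh w) (S.words_nonempty 1), fun k => ?_⟩
  induction k with
  | zero =>
    have h0 : S.words 0 = {[]} := by
      ext w
      rw [mem_words, List.length_eq_zero_iff, Finset.mem_singleton, and_iff_left_iff_imp]
      rintro rfl
      exact List.isChain_nil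
    simp [h0, wordWeight, alpha2, wdims]
  | succ k ih =>
    rw [pow_succ]
    exact (S.sum_words_add_le (fun w => (wordWeight_pos hh r w).le)
      (fun w => (prod_map_pos hh w).le) (wordWeight_append_le_mul_prod hh hr) k 1).trans
      (mul_le_mul_of_nonneg_right ih (Finset.sum_nonneg fun w _ => (prod_map_pos hh w).le))

theorem exists_tendsto_log_sum_words [Finite V] (hSC : S.StronglyConnected)
    (hh : ∀ e, 0 < h e) (r : ℝ) :
    ∃ L, Filter.Tendsto (fun k : ℕ => Real.log (∑ w ∈ S.words k, S.wordWeight h r w) / k)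
      Filter.atTop (nhds L) := by
  rcases le_total r 0 with hr | hr
  · obtain ⟨c, hc, hu⟩ := exists_pow_le_sum_words (S := S) hh hr
    exact exists_tendsto_log_div_of_submul hc hu
      (S.sum_words_add_le (fun w => (wordWeight_pos hh r w).le)
        (fun w => (wordWeight_pos hh r w).le) (wordWeight_append_le hh hr))
  · obtain ⟨C, hC, hu⟩ := exists_sum_words_le_pow (S := S) hh hr
    obtain ⟨c, hc, hmul⟩ := exists_mul_sum_words_le hSC hh hr
    exact exists_tendsto_log_div_of_supermul hc hC (sum_words_pos hh r) hu hmul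

theorem exists_logPressure_bounds (hh : ∀ e, 0 < h e) {L : ℝ → ℝ}
    (hL : ∀ r, Filter.Tendsto
      (fun k : ℕ => Real.log (∑ w ∈ S.words k, S.wordWeight h r w) / k)
      Filter.atTop (nhds (L r))) :
    ∃ A B : ℝ, 0 < B ∧ ∀ r d, 0 ≤ d → L r - A * d ≤ L (r + d) ∧ L (r + d) ≤ L r - B * d := by
  have := S.nonempty_edge
  obtain ⟨m, ρ, hm, hρ, hρ1, hb⟩ := S.exists_ratio_bounds
  refine ⟨-Real.log m, -Real.log ρ, neg_pos.2 (Real.log_neg hρ hρ1), fun r d hd => ?_⟩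
  have key : ∀ k : ℕ, k ≠ 0 → _ := fun k hk =>
    log_div_bounds (v := ∑ w ∈ S.words k, S.wordWeight h (r + d) w)
      (sum_words_pos (S := S) hh r k) (Real.rpow_pos_of_pos hm d) (Real.rpow_pos_of_pos hρ d) hk
      (by
        rw [Finset.mul_sum]
        refine Finset.sum_le_sum fun w hw => ?_
        rw [← (mem_words.1 hw).1]
        exact (wordWeight_add hh hm hb r hd w).1)
      (by
        rw [Finset.mul_sum]
        refine Finset.sum_le_sum fun w hw => ?_
        rw [← (mem_words.1 hw).1]
        exact (wordWeight_add hh hm hb r hd w).2)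
  have hev := Filter.eventually_ne_atTop (0 : ℕ)
  have h1 := le_of_tendsto_of_tendsto ((hL r).const_add (Real.log (m ^ d))) (hL (r + d))
    (hev.mono fun k hk => (key k hk).1)
  have h2 := le_of_tendsto_of_tendsto (hL (r + d)) ((hL r).const_add (Real.log (ρ ^ d)))
    (hev.mono fun k hk => (key k hk).2)
  rw [Real.log_rpow hm] at h1
  rw [Real.log_rpow hρ] at h2
  constructor <;> linarith

end Pressure

end BoxLikeGIFS

/-- A function whose decrements are bounded above and below by positive multiples of the
increments of its argument is strictly decreasing and has a unique zero. -/
theorem strictAnti_and_existsUnique_zero {L : ℝ → ℝ} {A B : ℝ} (hB : 0 < B)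
    (h : ∀ r d, 0 ≤ d → L r - A * d ≤ L (r + d) ∧ L (r + d) ≤ L r - B * d) :
    StrictAnti L ∧ ∃! r, L r = 0 := by
  have hanti : StrictAnti L := fun x y hxy => by
    have h1 := (h x (y - x) (sub_nonneg.2 hxy.le)).2
    rw [add_sub_cancel] at h1
    have h2 := mul_pos hB (sub_pos.2 hxy)
    linarith
  have hBA : B ≤ A := by linarith [(h 0 1 zero_le_one).1, (h 0 1 zero_le_one).2]
  have hlip : LipschitzWith A.toNNReal L := LipschitzWith.of_le_add_mul _ fun x y => by
    rw [Real.coe_toNNReal A (hB.le.trans hBA), Real.dist_eq]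
    rcases le_total x y with hxy | hxy
    · have h1 := (h x (y - x) (sub_nonneg.2 hxy)).1
      rw [add_sub_cancel] at h1
      rw [abs_sub_comm, abs_of_nonneg (sub_nonneg.2 hxy)]
      linarith
    · have h1 := hanti.antitone hxy
      have h2 := mul_nonneg (hB.le.trans hBA) (abs_nonneg (x - y))
      linarith
  set d := |L 0| / B
  have hd : 0 ≤ d := by positivity
  have hBd : B * d = |L 0| := mul_div_cancel₀ _ hB.ne'
  have hpos : 0 ≤ L (-d) := by
    have h1 := (h (-d) d hd).2
    rw [neg_add_cancel, hBd] at h1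
    linarith [neg_abs_le (L 0)]
  have hneg : L d ≤ 0 := by
    have h1 := (h 0 d hd).2
    rw [zero_add, hBd] at h1
    linarith [le_abs_self (L 0)]
  obtain ⟨r, hr⟩ := mem_range_of_exists_le_of_exists_ge hlip.continuous ⟨d, hneg⟩ ⟨-d, hpos⟩
  exact ⟨hanti, r, hr, fun r' hr' => hanti.injective (hr'.trans hr.symm)⟩

namespace BoxLikeGIFS

theorem exists_pressure {V E : Type*} [Fintype V] [Fintype E] [Nonempty V]
    {S : BoxLikeGIFS V E} (hSC : S.StronglyConnected) {p : E → ℝ} (hp : ∀ e, 0 < p e)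
    {τx τy : V → ℝ} {t : ℝ} (hc : S.Compatible τx τy t) (q : ℝ) :
    ∃ P : ℝ → ℝ, (∀ s, Filter.Tendsto
      (fun k : ℕ => mnorm (S.Amat p τx τy s q k) ^ ((k : ℝ)⁻¹)) Filter.atTop (nhds (P s))) ∧
      StrictAnti P ∧ ∃! s, P s = 1 := by
  have hh := S.edgeWeight_pos hp τx τy q
  choose L hL using exists_tendsto_log_sum_words hSC hh
  obtain ⟨A, B, hB, hAB⟩ := exists_logPressure_bounds hh hL
  obtain ⟨hanti, r, hr, huniq⟩ := strictAnti_and_existsUnique_zero hB hAB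
  refine ⟨fun s => Real.exp (L (s - t)), fun s => ?_, fun x y hxy => ?_, r + t, ?_, fun s hs => ?_⟩
  · refine ((Real.continuous_exp.tendsto _).comp (hL (s - t))).congr fun k => ?_
    rw [mnorm_Amat hp hc, Real.rpow_def_of_pos (sum_words_pos hh _ k), Function.comp_apply,
      div_eq_mul_inv]
  · exact Real.exp_lt_exp.2 (hanti (sub_lt_sub_right hxy t))
  · simp [hr]
  · rw [← huniq (s - t) (Real.exp_eq_one_iff _ |>.1 hs), sub_add_cancel]

end BoxLikeGIFS

end LqGIFS

/-- the pressure function.  For every `s ∈ ℝ` and `q ≥ 0` the limit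
`P(s,q) = lim_k ‖A_k^{s,q}‖^{1/k}` exists; moreover for each fixed `q ≥ 0` the function
`s ↦ P(s,q)` is strictly decreasing and there is a unique `s` with `P(s,q) = 1`. -/
theorem statement16
    {V E : Type} [Fintype V] [Fintype E] [Nonempty V]
    (S : BoxLikeGIFS V E) (hSC : S.StronglyConnected)
    (p : E → ℝ) (hp : S.IsWeights p)
    (μ : V → Measure (ℝ × ℝ)) (hμ : S.IsGDMeasure p μ)
    (τx τy : V → ℝ → ℝ)
    (hτx : ∀ q : ℝ, 0 ≤ q → ∀ v : V, HasLq1 ((μ v).map Prod.fst) q (τx v q))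
    (hτy : ∀ q : ℝ, 0 ≤ q → ∀ v : V, HasLq1 ((μ v).map Prod.snd) q (τy v q)) :
    ∃ P : ℝ → ℝ → ℝ,
      (∀ q : ℝ, 0 ≤ q → ∀ s : ℝ,
        Tendsto
          (fun k : ℕ =>
            (mnorm (S.Amat p (fun v => τx v q) (fun v => τy v q) s q k)) ^ ((k : ℝ)⁻¹))
          atTop (nhds (P s q))) ∧
      (∀ q : ℝ, 0 ≤ q → StrictAnti (fun s : ℝ => P s q)) ∧
      (∀ q : ℝ, 0 ≤ q → ∃! s : ℝ, P s q = 1) := by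
  have key : ∀ q : ℝ, ∃ P : ℝ → ℝ, 0 ≤ q → (∀ s, Tendsto
      (fun k : ℕ => mnorm (S.Amat p (fun v => τx v q) (fun v => τy v q) s q k) ^ ((k : ℝ)⁻¹))
      atTop (nhds (P s))) ∧ StrictAnti P ∧ ∃! s, P s = 1 := by
    intro q
    by_cases hq : 0 ≤ q
    · obtain ⟨t, ht⟩ := BoxLikeGIFS.compatible_of_hasLq1 hSC hp hμ hq (hτx q hq) (hτy q hq)
      obtain ⟨P, hP⟩ := BoxLikeGIFS.exists_pressure hSC hp.1 ht q
      exact ⟨P, fun _ => hP⟩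
    · exact ⟨0, fun h => absurd h hq⟩
  choose P hP using key
  exact ⟨fun s q => P q s, fun q hq => (hP q hq).1, fun q hq => (hP q hq).2.1,
    fun q hq => (hP q hq).2.2⟩
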